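/- arXiv:1009.0540 — 3 statements merged into one kernel-verified Lean document; each statement's English description precedes it below -/
import Mathlib

section
/- Nonlinear Hilbert transform inequality for monotone even functions (Proposition nonlinlp): For every p ≥ 1 and σ > 0 there exists a constant C₀ > 0, depending only on p and σ, such that the following holds. Let f : ℝ → ℝ be C¹, even, bounded, with f(0) = 0 and f'(x) ≥ 0 for x > 0, and let Hf(x) = (1/π) lim_{R→∞} lim_{ε→0+} ∫_{ε<|x−y|<R} f(y)/(x−y) dy be its Hilbert transform (which exists for such f). Then − ∫_0^1 Hf(x) f'(x) f(x)^{p−1} / x^σ dx ≥ C₀ ∫_0^1 f(x)^{p+1} / x^{1+σ} dx, where the inequality is understood in the extended sense: if the right-hand side is infinite, then the left-hand side is infinite as well. -/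
open Set MeasureTheory Filter Topology

/-- `HilbertPVAt f x v` says that the iterated principal value
`lim_{R→∞} lim_{ε→0+} ∫_{ε<|x−y|<R} f(y)/(x−y) dy` exists and equals `v`
(so that the Hilbert transform of `f` at `x` is `v/π`). -/
def HilbertPVAt (f : ℝ → ℝ) (x v : ℝ) : Prop :=
  ∃ g : ℝ → ℝ,
    (∀ R, 0 < R → Tendsto (fun ε => ∫ y in {y : ℝ | ε < |x - y| ∧ |x - y| < R}, f y / (x - y))
      (nhdsWithin 0 (Ioi 0)) (nhds (g R))) ∧
    Tendsto g atTop (nhds v)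

/-- A discrete Hardy inequality with geometric weights. -/
lemma tsum_geometric_mul_tail_rpow_le (D : ℕ → ENNReal) {s : ℝ} (hs : 0 < s) {r : ENNReal}
    (hr0 : r ≠ 0) (hr1 : r < 1) :
    ∑' k, ((r ^ s)⁻¹ ^ 2) ^ k * (∑' i, D (k + i)) ^ s ≤
      ((1 - r)⁻¹ ^ s * (1 - r ^ s)⁻¹) * ∑' k, ((r ^ s)⁻¹ ^ 2) ^ k * D k ^ s := by
  have hrt : r ≠ ⊤ := hr1.ne_top
  set v := r ^ s with hv
  have hv0 : v ≠ 0 := by simp [hv, ENNReal.rpow_eq_zero_iff, hr0, hrt]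
  have hvt : v ≠ ⊤ := ENNReal.rpow_ne_top_of_nonneg hs.le hrt
  have htail : ∀ k, (∑' i, D (k + i)) ^ s ≤
      (1 - r)⁻¹ ^ s * ∑' i, v⁻¹ ^ i * D (k + i) ^ s := by
    intro k
    set T := ∑' i, v⁻¹ ^ i * D (k + i) ^ s
    have hD : ∀ i, D (k + i) ≤ r ^ i * T ^ (1 / s) := by
      intro i
      have h1 : v⁻¹ ^ i * D (k + i) ^ s ≤ T := ENNReal.le_tsum i
      have h2 : D (k + i) ^ s ≤ v ^ i * T := by
        calc D (k + i) ^ s = v ^ i * (v⁻¹ ^ i * D (k + i) ^ s) := by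
              rw [← mul_assoc, ← mul_pow, ENNReal.mul_inv_cancel hv0 hvt, one_pow, one_mul]
          _ ≤ _ := by gcongr
      have h3 : v ^ i = (r ^ i) ^ s := by
        rw [hv, ← ENNReal.rpow_natCast, ← ENNReal.rpow_natCast, ← ENNReal.rpow_mul,
          ← ENNReal.rpow_mul, mul_comm]
      have h4 : (D (k + i) ^ s) ^ (1 / s) ≤ ((r ^ i) ^ s * T) ^ (1 / s) := by
        rw [← h3]; gcongr
      rwa [ENNReal.mul_rpow_of_nonneg _ _ (by positivity), ← ENNReal.rpow_mul,
        ← ENNReal.rpow_mul, mul_one_div_cancel hs.ne', ENNReal.rpow_one, ENNReal.rpow_one] at h4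
    have hsum : ∑' i, D (k + i) ≤ (1 - r)⁻¹ * T ^ (1 / s) := by
      calc ∑' i, D (k + i) ≤ ∑' i, r ^ i * T ^ (1 / s) := ENNReal.tsum_le_tsum hD
        _ = _ := by rw [ENNReal.tsum_mul_right, ENNReal.tsum_geometric]
    calc (∑' i, D (k + i)) ^ s ≤ ((1 - r)⁻¹ * T ^ (1 / s)) ^ s := by gcongr
      _ = _ := by
        rw [ENNReal.mul_rpow_of_nonneg _ _ hs.le, ← ENNReal.rpow_mul,
          one_div_mul_cancel hs.ne', ENNReal.rpow_one]
  have hweight : ∀ k i : ℕ, (v⁻¹ ^ 2) ^ k * v⁻¹ ^ i = v ^ i * (v⁻¹ ^ 2) ^ (k + i) := by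
    intro k i
    have h : v ^ i * v⁻¹ ^ i = 1 := by
      rw [← mul_pow, ENNReal.mul_inv_cancel hv0 hvt, one_pow]
    calc (v⁻¹ ^ 2) ^ k * v⁻¹ ^ i = (v ^ i * v⁻¹ ^ i) * ((v⁻¹ ^ 2) ^ k * v⁻¹ ^ i) := by
          rw [h, one_mul]
      _ = _ := by ring
  calc ∑' k, (v⁻¹ ^ 2) ^ k * (∑' i, D (k + i)) ^ s
      ≤ ∑' k, (v⁻¹ ^ 2) ^ k * ((1 - r)⁻¹ ^ s * ∑' i, v⁻¹ ^ i * D (k + i) ^ s) := by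
        gcongr with k; exact htail k
    _ = (1 - r)⁻¹ ^ s * ∑' k, ∑' i, v ^ i * ((v⁻¹ ^ 2) ^ (k + i) * D (k + i) ^ s) := by
        rw [← ENNReal.tsum_mul_left]
        congr 1; ext k
        rw [mul_left_comm, ← ENNReal.tsum_mul_left]
        congr 2; ext i
        rw [← mul_assoc, hweight, mul_assoc]
    _ = (1 - r)⁻¹ ^ s * ∑' i, v ^ i * ∑' k, (v⁻¹ ^ 2) ^ (k + i) * D (k + i) ^ s := by
        rw [ENNReal.tsum_comm]
        simp_rw [ENNReal.tsum_mul_left]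
    _ ≤ (1 - r)⁻¹ ^ s * ∑' i, v ^ i * ∑' k, (v⁻¹ ^ 2) ^ k * D k ^ s := by
        refine mul_le_mul_right (ENNReal.tsum_le_tsum fun i => mul_le_mul_right ?_ _) _
        exact ENNReal.tsum_comp_le_tsum_of_injective (add_left_injective i)
          (fun k => (v⁻¹ ^ 2) ^ k * D k ^ s)
    _ = _ := by rw [ENNReal.tsum_mul_right, ENNReal.tsum_geometric, mul_assoc]

/-- The truncated Hilbert integral, folded about the singularity. -/
lemma setIntegral_div_sub_eq {f : ℝ → ℝ} (hf : Continuous f) {x ε R : ℝ} (hε : 0 < ε)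
    (hR : ε < R) :
    ∫ y in {y : ℝ | ε < |x - y| ∧ |x - y| < R}, f y / (x - y) =
      -∫ t in ε..R, (f (x + t) - f (x - t)) / t := by
  have hset : {y : ℝ | ε < |x - y| ∧ |x - y| < R} =
      Ioo (x - R) (x - ε) ∪ Ioo (x + ε) (x + R) := by
    ext y
    simp only [mem_ofPred_eq, mem_union, mem_Ioo, lt_abs, abs_lt]
    constructor
    · rintro ⟨h | h, h1, h2⟩
      · left; constructor <;> linarith
      · right; constructor <;> linarith
    · rintro (⟨h1, h2⟩ | ⟨h1, h2⟩)
      · exact ⟨Or.inl (by linarith), by linarith, by linarith⟩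
      · exact ⟨Or.inr (by linarith), by linarith, by linarith⟩
  have hdisj : Disjoint (Ioo (x - R) (x - ε)) (Ioo (x + ε) (x + R)) := by
    rw [Set.disjoint_left]
    rintro y ⟨_, h1⟩ ⟨h2, _⟩
    linarith
  have hcont : ∀ s : Set ℝ, (∀ y ∈ s, x - y ≠ 0) → ContinuousOn (fun y => f y / (x - y)) s :=
    fun s hs => hf.continuousOn.div (by fun_prop) hs
  have hleft : IntegrableOn (fun y => f y / (x - y)) (Ioo (x - R) (x - ε)) := by
    refine ((hcont (Icc (x - R) (x - ε)) fun y hy => ?_).integrableOn_Icc).mono_set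
      Ioo_subset_Icc_self
    have := hy.2; intro h; linarith
  have hright : IntegrableOn (fun y => f y / (x - y)) (Ioo (x + ε) (x + R)) := by
    refine ((hcont (Icc (x + ε) (x + R)) fun y hy => ?_).integrableOn_Icc).mono_set
      Ioo_subset_Icc_self
    have := hy.1; intro h; linarith
  have hne : ∀ t ∈ uIcc ε R, t ≠ 0 := by
    intro t ht
    rw [uIcc_of_le hR.le] at ht
    exact (hε.trans_le ht.1).ne'
  rw [hset, setIntegral_union hdisj measurableSet_Ioo hleft hright,
    ← integral_Ioc_eq_integral_Ioo, ← integral_Ioc_eq_integral_Ioo,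
    ← intervalIntegral.integral_of_le (by linarith),
    ← intervalIntegral.integral_of_le (by linarith),
    ← intervalIntegral.integral_comp_sub_left (fun y => f y / (x - y)) x,
    ← intervalIntegral.integral_comp_add_left (fun y => f y / (x - y)) x,
    ← intervalIntegral.integral_neg, ← intervalIntegral.integral_add]
  · apply intervalIntegral.integral_congr
    intro t ht
    have := hne t ht
    simp only [sub_sub_cancel, sub_add_cancel_left]
    field_simp
    ring
  · refine ContinuousOn.intervalIntegrable ?_
    exact ContinuousOn.div (by fun_prop) (by fun_prop)
      (fun t ht => by simpa using hne t ht)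
  · refine ContinuousOn.intervalIntegrable ?_
    exact ContinuousOn.div (by fun_prop) (by fun_prop)
      (fun t ht => by simpa using hne t ht)

/-- The principal value of an even function that is nondecreasing on `[0, ∞)` controls its
dyadic increments. -/
lemma HilbertPVAt.le_of_even_monotone {f : ℝ → ℝ} (hf : Continuous f)
    (heven : ∀ x, f (-x) = f x) (hmono : MonotoneOn f (Ici 0)) {a x v : ℝ} (ha : 0 < a)
    (hax : a ≤ x) (hxa : x ≤ 2 * a) (hv : HilbertPVAt f x v) :
    (f (2 * a) - f a) / 2 ≤ -v := by
  have habs : ∀ y, f |y| = f y := by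
    intro y
    rcases abs_choice y with h | h <;> rw [h]
    exact heven y
  have hle : ∀ y z : ℝ, |y| ≤ z → f y ≤ f z := by
    intro y z h
    rw [← habs y]
    exact hmono (abs_nonneg y) ((abs_nonneg y).trans h) h
  have hx : 0 < x := ha.trans_le hax
  have hfold : ∀ ε R : ℝ, 0 < ε → ε < a → 2 * a < R →
      (f (2 * a) - f a) / 2 ≤ ∫ t in ε..R, (f (x + t) - f (x - t)) / t := by
    intro ε R hε hεa hR
    have hint : ∀ c d : ℝ, 0 < c → c ≤ d → IntervalIntegrable
        (fun t => (f (x + t) - f (x - t)) / t) volume c d := by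
      intro c d hc hcd
      refine ContinuousOn.intervalIntegrable (ContinuousOn.div (by fun_prop) (by fun_prop) ?_)
      intro t ht
      rw [uIcc_of_le hcd] at ht
      exact (hc.trans_le ht.1).ne'
    calc (f (2 * a) - f a) / 2 = ∫ _ in a..(2 * a), (f (2 * a) - f a) / (2 * a) := by
          rw [intervalIntegral.integral_const, smul_eq_mul]
          field_simp
          ring
      _ ≤ ∫ t in a..(2 * a), (f (x + t) - f (x - t)) / t := by
          refine intervalIntegral.integral_mono_on (by linarith) (by simp)
            (hint _ _ ha (by linarith)) fun t ht => ?_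
          have ht0 : 0 < t := ha.trans_le ht.1
          have h1 : f (2 * a) ≤ f (x + t) :=
            hle _ _ (by rw [abs_of_pos (by linarith)]; linarith [ht.1])
          have h2 : f (x - t) ≤ f a := hle _ _ (by
            rw [abs_le]; constructor <;> linarith [ht.1, ht.2])
          have h3 : f a ≤ f (2 * a) := hle _ _ (by rw [abs_of_pos ha]; linarith)
          exact div_le_div₀ (by linarith) (by linarith) ht0 ht.2
      _ ≤ _ := by
          refine intervalIntegral.integral_mono_interval hεa.le (by linarith) hR.le ?_
            (hint _ _ hε (by linarith))
          filter_upwards [ae_restrict_mem measurableSet_Ioc] with t ht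
          have ht0 : 0 < t := hε.trans ht.1
          refine div_nonneg (sub_nonneg.2 (hle _ _ ?_)) ht0.le
          rw [abs_le]; constructor <;> linarith
  obtain ⟨g, hg, hgv⟩ := hv
  rw [le_neg]
  refine le_of_tendsto hgv ?_
  filter_upwards [eventually_gt_atTop (2 * a)] with R hR
  refine le_of_tendsto (hg R (by linarith)) ?_
  filter_upwards [Ioo_mem_nhdsGT ha] with ε hε
  rw [setIntegral_div_sub_eq hf hε.1 (by linarith [hε.2])]
  exact neg_le_neg (hfold ε R hε.1 hε.2 hR)

lemma lintegral_deriv_mul_rpow_ge {f : ℝ → ℝ} (hf : ContDiff ℝ 1 f) {p a b : ℝ} (hp : 1 ≤ p)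
    (hab : a ≤ b) (hfa : 0 ≤ f a) (hfab : f a ≤ f b) :
    ENNReal.ofReal ((f b - f a) ^ p / p) ≤
      ∫⁻ x in Ioo a b, ENNReal.ofReal (deriv f x * f x ^ (p - 1)) := by
  have hp0 : 0 < p := by linarith
  have hderiv : ∀ x, HasDerivAt f (deriv f x) x := fun x =>
    (hf.differentiable one_ne_zero x).hasDerivAt
  have hcont : Continuous fun x => deriv f x * f x ^ (p - 1) :=
    (hf.continuous_deriv le_rfl).mul
      (hf.continuous.rpow_const fun x => Or.inr (by linarith))
  have hftc : ∫ x in a..b, deriv f x * f x ^ (p - 1) = (f b ^ p - f a ^ p) / p := by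
    rw [intervalIntegral.integral_eq_sub_of_hasDerivAt (f := fun x => f x ^ p / p)
      (fun x _ => ?_) (hcont.intervalIntegrable _ _)]
    · ring
    · refine (((hderiv x).rpow_const (Or.inr hp)).div_const p).congr_deriv ?_
      rw [div_eq_iff hp0.ne']
      ring
  have hsuper : (f b - f a) ^ p ≤ f b ^ p - f a ^ p := by
    have := Real.add_rpow_le_rpow_add (sub_nonneg.2 hfab) hfa hp
    rw [sub_add_cancel] at this
    linarith
  calc ENNReal.ofReal ((f b - f a) ^ p / p)
      ≤ ENNReal.ofReal (∫ x in Ioo a b, deriv f x * f x ^ (p - 1)) := by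
        rw [← integral_Ioc_eq_integral_Ioo, ← intervalIntegral.integral_of_le hab, hftc]
        gcongr
    _ ≤ _ := by
        rw [integral_eq_lintegral_pos_part_sub_lintegral_neg_part
          (hcont.integrableOn_Icc.mono_set Ioo_subset_Icc_self)]
        exact (ENNReal.ofReal_le_ofReal (sub_le_self _ ENNReal.toReal_nonneg)).trans
          ENNReal.ofReal_toReal_le

lemma lintegral_rpow_div_rpow_le {f : ℝ → ℝ} (hmono : MonotoneOn f (Ici 0)) (hf0 : 0 ≤ f 0)
    {s σ a : ℝ} (hs : 0 ≤ s) (hσ : 0 ≤ σ) (ha : 0 < a) :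
    ∫⁻ x in Ioc a (2 * a), ENNReal.ofReal (f x ^ s / x ^ (1 + σ)) ≤
      ENNReal.ofReal (f (2 * a) ^ s / a ^ σ) := by
  have hnonneg : ∀ x, 0 ≤ x → 0 ≤ f x := fun x hx => hf0.trans (hmono self_mem_Ici hx hx)
  have h2a := hnonneg (2 * a) (by positivity)
  calc ∫⁻ x in Ioc a (2 * a), ENNReal.ofReal (f x ^ s / x ^ (1 + σ))
      ≤ ∫⁻ _ in Ioc a (2 * a), ENNReal.ofReal (f (2 * a) ^ s / a ^ (1 + σ)) := by
        refine setLIntegral_mono measurable_const fun x hx => ENNReal.ofReal_le_ofReal ?_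
        have hx0 : 0 < x := ha.trans hx.1
        have h1 : f x ≤ f (2 * a) := hmono hx0.le (hx0.le.trans hx.2) hx.2
        have h2 := hnonneg x hx0.le
        have h3 := hx.1.le
        gcongr
    _ = ENNReal.ofReal (f (2 * a) ^ s / a ^ σ) := by
        rw [setLIntegral_const, Real.volume_Ioc, ← ENNReal.ofReal_mul (by positivity),
          Real.rpow_add ha, Real.rpow_one]
        congr 1
        field_simp
        ring

lemma lintegral_hilbert_mul_deriv_ge {f Hf : ℝ → ℝ} (hf : ContDiff ℝ 1 f)
    (heven : ∀ x, f (-x) = f x) (hmono : MonotoneOn f (Ici 0)) (hf0 : f 0 = 0)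
    (hderiv : ∀ x > (0 : ℝ), 0 ≤ deriv f x) (hH : ∀ x, HilbertPVAt f x (Real.pi * Hf x))
    {p σ a : ℝ} (hp : 1 ≤ p) (hσ : 0 ≤ σ) (ha : 0 < a) :
    ENNReal.ofReal (1 / (2 * Real.pi * p) *
        (((2 * a) ^ σ)⁻¹ * (f (2 * a) - f a) ^ (p + 1))) ≤
      ∫⁻ x in Ioo a (2 * a), ENNReal.ofReal (-(Hf x * deriv f x * f x ^ (p - 1) / x ^ σ)) := by
  have hpi := Real.pi_pos
  have hp0 : 0 < p := by linarith
  have hnonneg : ∀ x, 0 ≤ x → 0 ≤ f x := fun x hx => hf0 ▸ hmono self_mem_Ici hx hx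
  have hfa := hnonneg a ha.le
  have hd : f a ≤ f (2 * a) := hmono ha.le (mem_Ici.2 (by positivity)) (by linarith)
  have hd' : 0 ≤ f (2 * a) - f a := sub_nonneg.2 hd
  set d := f (2 * a) - f a
  set κ : ℝ := d / (2 * Real.pi) * ((2 * a) ^ σ)⁻¹ with hκ
  have hκ0 : 0 ≤ κ := by positivity
  calc ENNReal.ofReal (1 / (2 * Real.pi * p) * (((2 * a) ^ σ)⁻¹ * d ^ (p + 1)))
      = ENNReal.ofReal κ * ENNReal.ofReal (d ^ p / p) := by
        rw [← ENNReal.ofReal_mul hκ0, Real.rpow_add_one' hd' (by linarith), hκ]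
        congr 1
        field_simp
    _ ≤ ENNReal.ofReal κ *
        ∫⁻ x in Ioo a (2 * a), ENNReal.ofReal (deriv f x * f x ^ (p - 1)) := by
        gcongr
        exact lintegral_deriv_mul_rpow_ge hf hp (by linarith) hfa hd
    _ = ∫⁻ x in Ioo a (2 * a), ENNReal.ofReal κ *
        ENNReal.ofReal (deriv f x * f x ^ (p - 1)) :=
        (lintegral_const_mul' _ _ ENNReal.ofReal_ne_top).symm
    _ ≤ _ := by
        refine setLIntegral_mono' measurableSet_Ioo fun x hx => ?_
        rw [← ENNReal.ofReal_mul hκ0]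
        refine ENNReal.ofReal_le_ofReal ?_
        have hx0 : 0 < x := ha.trans hx.1
        have hH' : d / (2 * Real.pi) ≤ -Hf x := by
          have := (hH x).le_of_even_monotone hf.continuous heven hmono ha hx.1.le hx.2.le
          rw [div_le_iff₀ (by positivity)]
          linarith
        have hpow : ((2 * a) ^ σ)⁻¹ ≤ (x ^ σ)⁻¹ := by
          have := hx.2.le
          gcongr
        have hprod : 0 ≤ deriv f x * f x ^ (p - 1) :=
          mul_nonneg (hderiv x hx0) (Real.rpow_nonneg (hnonneg x hx0.le) _)
        calc κ * (deriv f x * f x ^ (p - 1))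
            ≤ (-Hf x * (x ^ σ)⁻¹) * (deriv f x * f x ^ (p - 1)) := by
              refine mul_le_mul_of_nonneg_right (mul_le_mul hH' hpow (by positivity) ?_) hprod
              exact le_trans (by positivity) hH'
          _ = _ := by ring

/-- **Nonlinear Hilbert transform inequality for monotone even functions (Prop. nonlinlp).**
For every `p ≥ 1`, `σ > 0` there is `C₀ = C₀(p,σ) > 0` such that for every `C¹`, even,
bounded `f` with `f(0) = 0` and `f' ≥ 0` on `(0,∞)`, whose Hilbert transform `Hf` exists
everywhere, one has `−∫_0^1 Hf(x) f'(x) f(x)^{p−1} / x^σ dx ≥ C₀ ∫_0^1 f(x)^{p+1} / x^{1+σ} dx`,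
understood in the extended reals (both integrands are nonnegative). -/
theorem nonlinear_hilbert_inequality (p σ : ℝ) (hp : 1 ≤ p) (hσ : 0 < σ) :
    ∃ C₀ > (0:ℝ), ∀ (f Hf : ℝ → ℝ) (M : ℝ),
      ContDiff ℝ 1 f → (∀ x, f (-x) = f x) → (∀ x, |f x| ≤ M) → f 0 = 0 →
      (∀ x > (0:ℝ), 0 ≤ deriv f x) →
      (∀ x, HilbertPVAt f x (Real.pi * Hf x)) →
      ENNReal.ofReal C₀ *
          (∫⁻ x in Ioo (0:ℝ) 1, ENNReal.ofReal (f x ^ (p + 1) / x ^ (1 + σ)))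
        ≤ ∫⁻ x in Ioo (0:ℝ) 1,
            ENNReal.ofReal (-(Hf x * deriv f x * f x ^ (p - 1) / x ^ σ)) := by
  have hs : 0 < p + 1 := by linarith
  have hp0 : 0 < p := by linarith
  set c : ℝ := 1 / (2 * Real.pi * p)
  have hc0 : 0 < c := by have := Real.pi_pos; positivity
  set r : ENNReal := 2 ^ (-(σ / (2 * (p + 1)))) with hr
  have hr0 : r ≠ 0 := by simp [hr, ENNReal.rpow_eq_zero_iff]
  have hr1 : r < 1 := ENNReal.rpow_lt_one_of_one_lt_of_neg (by norm_num)
    (neg_lt_zero.2 (by positivity))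
  have hweight : (r ^ (p + 1))⁻¹ ^ 2 = ENNReal.ofReal (2 ^ σ) := by
    rw [hr, ← ENNReal.rpow_mul, ← ENNReal.rpow_neg, ← ENNReal.rpow_natCast, ← ENNReal.rpow_mul,
      ← ENNReal.ofReal_rpow_of_pos two_pos, ENNReal.ofReal_ofNat]
    congr 1
    push_cast
    field_simp
  set Q : ENNReal := ENNReal.ofReal (2 ^ σ) *
    ((1 - r)⁻¹ ^ (p + 1) * (1 - r ^ (p + 1))⁻¹) with hQ
  have hinv : ∀ q : ENNReal, q < 1 → (1 - q)⁻¹ ≠ 0 ∧ (1 - q)⁻¹ ≠ ⊤ := fun q hq =>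
    ⟨ENNReal.inv_ne_zero.2 (ENNReal.sub_ne_top ENNReal.one_ne_top),
      ENNReal.inv_ne_top.2 (tsub_pos_of_lt hq).ne'⟩
  have hinvr := hinv r hr1
  have hinvrs := hinv (r ^ (p + 1)) (ENNReal.rpow_lt_one hr1 hs)
  have hQ0 : Q ≠ 0 := by
    refine mul_ne_zero (ENNReal.ofReal_pos.2 (by positivity)).ne' (mul_ne_zero ?_ hinvrs.1)
    simp [ENNReal.rpow_eq_zero_iff, hinvr.1, hinvr.2]
  have hQt : Q ≠ ⊤ := ENNReal.mul_ne_top ENNReal.ofReal_ne_top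
    (ENNReal.mul_ne_top (ENNReal.rpow_ne_top_of_nonneg hs.le hinvr.2) hinvrs.2)
  have hQpos : 0 < Q.toReal := ENNReal.toReal_pos hQ0 hQt
  refine ⟨c / Q.toReal, by positivity, ?_⟩
  intro f Hf M hf heven _ hf0 hderiv hH
  have hmono : MonotoneOn f (Ici 0) := by
    refine monotoneOn_of_deriv_nonneg (convex_Ici 0) hf.continuous.continuousOn
      (hf.differentiable one_ne_zero).differentiableOn fun x hx => hderiv x ?_
    simpa using hx
  have hnonneg : ∀ x, 0 ≤ x → 0 ≤ f x := fun x hx => hf0 ▸ hmono self_mem_Ici hx hx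
  set a : ℕ → ℝ := fun k => (1 / 2) ^ k with ha
  have ha0 : ∀ k, 0 < a k := fun k => by positivity
  have hasucc : ∀ k, 2 * a (k + 1) = a k := fun k => by simp only [ha, pow_succ]; ring
  have hanti : Antitone a := pow_right_anti₀ (by norm_num) (by norm_num)
  have hstep : ∀ k, f (a (k + 1)) ≤ f (a k) := fun k =>
    hmono (ha0 _).le (ha0 _).le (hanti k.le_succ)
  set D : ℕ → ENNReal := fun k => ENNReal.ofReal (f (a k) - f (a (k + 1))) with hD
  have hapow : ∀ k, (a k ^ σ)⁻¹ = (2 ^ σ) ^ k := by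
    intro k
    rw [← Real.inv_rpow (ha0 k).le, ← Real.rpow_natCast (2 ^ σ), ← Real.rpow_mul zero_le_two,
      mul_comm, Real.rpow_mul zero_le_two, Real.rpow_natCast]
    simp [ha]
  have htel : ∀ k, ENNReal.ofReal (f (a k)) = ∑' i, D (k + i) := by
    intro k
    have hsum : HasSum (fun i => f (a (k + i)) - f (a (k + i + 1))) (f (a k)) := by
      rw [hasSum_iff_tendsto_nat_of_nonneg (fun i => sub_nonneg.2 (hstep _))]
      have h1 : ∀ n, ∑ i ∈ Finset.range n, (f (a (k + i)) - f (a (k + i + 1))) =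
          f (a k) - f (a (k + n)) := fun n =>
        Finset.sum_range_sub' (fun i => f (a (k + i))) n
      simp_rw [h1]
      have h2 : Tendsto (fun n => a (k + n)) atTop (𝓝 0) := by
        simp_rw [add_comm k]
        exact (tendsto_add_atTop_iff_nat k).2
          (tendsto_pow_atTop_nhds_zero_of_lt_one (by norm_num) (by norm_num))
      have h3 := (hf.continuous.tendsto 0).comp h2
      rw [hf0] at h3
      simpa using h3.const_sub (f (a k))
    rw [← hsum.tsum_eq, ENNReal.ofReal_tsum_of_nonneg (fun i => sub_nonneg.2 (hstep _))
      hsum.summable]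
  have hupper : ∀ k, ∫⁻ x in Ioc (a (k + 1)) (a k),
      ENNReal.ofReal (f x ^ (p + 1) / x ^ (1 + σ)) ≤
        ENNReal.ofReal (2 ^ σ) *
          (ENNReal.ofReal (2 ^ σ) ^ k * ENNReal.ofReal (f (a k)) ^ (p + 1)) := by
    intro k
    have h := lintegral_rpow_div_rpow_le hmono (hnonneg 0 le_rfl) hs.le hσ.le (ha0 (k + 1))
    rw [hasucc, div_eq_mul_inv, hapow] at h
    refine h.trans_eq ?_
    rw [ENNReal.ofReal_mul (Real.rpow_nonneg (hnonneg _ (ha0 k).le) _),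
      ENNReal.ofReal_pow (by positivity),
      ← ENNReal.ofReal_rpow_of_nonneg (hnonneg _ (ha0 k).le) hs.le]
    ring
  have hlower : ∀ k, ENNReal.ofReal c * (ENNReal.ofReal (2 ^ σ) ^ k * D k ^ (p + 1)) ≤
      ∫⁻ x in Ioo (a (k + 1)) (a k),
        ENNReal.ofReal (-(Hf x * deriv f x * f x ^ (p - 1) / x ^ σ)) := by
    intro k
    have h := lintegral_hilbert_mul_deriv_ge hf heven hmono hf0 hderiv hH hp hσ.le (ha0 (k + 1))
    rw [hasucc, hapow] at h
    refine Eq.trans_le ?_ h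
    rw [hD, ENNReal.ofReal_rpow_of_nonneg (sub_nonneg.2 (hstep k)) hs.le,
      ← ENNReal.ofReal_pow (by positivity), ← ENNReal.ofReal_mul (by positivity),
      ← ENNReal.ofReal_mul hc0.le]
  have hcover : Ioo (0 : ℝ) 1 ⊆ ⋃ k, Ioc (a (k + 1)) (a k) := by
    intro x hx
    obtain ⟨k, hk1, hk2⟩ := exists_nat_pow_near_of_lt_one hx.1 hx.2.le
      (show (0 : ℝ) < 1 / 2 by norm_num) (by norm_num)
    exact mem_iUnion.2 ⟨k, hk1, hk2⟩
  have hdisj : Pairwise (Function.onFun Disjoint fun k => Ioo (a (k + 1)) (a k)) :=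
    hanti.pairwise_disjoint_on_Ioo_succ
  have hsub : ⋃ k, Ioo (a (k + 1)) (a k) ⊆ Ioo (0 : ℝ) 1 :=
    iUnion_subset fun k => Ioo_subset_Ioo (ha0 _).le (pow_le_one₀ (by norm_num) (by norm_num))
  set S : ENNReal := ∑' k, ENNReal.ofReal (2 ^ σ) ^ k * D k ^ (p + 1) with hS
  have hleft : ∫⁻ x in Ioo (0 : ℝ) 1, ENNReal.ofReal (f x ^ (p + 1) / x ^ (1 + σ)) ≤ Q * S := by
    calc _ ≤ ∫⁻ x in ⋃ k, Ioc (a (k + 1)) (a k),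
          ENNReal.ofReal (f x ^ (p + 1) / x ^ (1 + σ)) := lintegral_mono_set hcover
      _ ≤ ∑' k, ∫⁻ x in Ioc (a (k + 1)) (a k),
          ENNReal.ofReal (f x ^ (p + 1) / x ^ (1 + σ)) := lintegral_iUnion_le _ _
      _ ≤ ENNReal.ofReal (2 ^ σ) *
          ∑' k, ENNReal.ofReal (2 ^ σ) ^ k * (∑' i, D (k + i)) ^ (p + 1) := by
        rw [← ENNReal.tsum_mul_left]
        simp_rw [← htel]
        exact ENNReal.tsum_le_tsum hupper
      _ ≤ ENNReal.ofReal (2 ^ σ) *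
          (((1 - r)⁻¹ ^ (p + 1) * (1 - r ^ (p + 1))⁻¹) * S) := by
        rw [hS, ← hweight]
        exact mul_le_mul_right (tsum_geometric_mul_tail_rpow_le D hs hr0 hr1) _
      _ = Q * S := (mul_assoc _ _ _).symm
  calc _ ≤ ENNReal.ofReal c / Q * (Q * S) := by
        rw [ENNReal.ofReal_div_of_pos hQpos, ENNReal.ofReal_toReal hQt]
        gcongr
    _ = ENNReal.ofReal c * S := by
        rw [← mul_assoc, ENNReal.div_mul_cancel hQ0 hQt]
    _ ≤ ∑' k, ∫⁻ x in Ioo (a (k + 1)) (a k),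
        ENNReal.ofReal (-(Hf x * deriv f x * f x ^ (p - 1) / x ^ σ)) := by
        rw [hS, ← ENNReal.tsum_mul_left]
        exact ENNReal.tsum_le_tsum hlower
    _ = ∫⁻ x in ⋃ k, Ioo (a (k + 1)) (a k),
        ENNReal.ofReal (-(Hf x * deriv f x * f x ^ (p - 1) / x ^ σ)) :=
        (lintegral_iUnion (fun k => measurableSet_Ioo) hdisj _).symm
    _ ≤ _ := lintegral_mono_set hsub
end

section
/- Representation formula for the Hilbert transform of an even function (Lemma htest): Let f : ℝ → ℝ be C¹, even, and bounded, and let Hf(x) = (1/π) lim_{R→∞} lim_{ε→0+} ∫_{ε<|x−y|<R} f(y)/(x−y) dy be its Hilbert transform, assumed to exist at the point x > 0 along with the integrals below. Then π · Hf(x) = ∫_0^{2x} log| (y−x)/x | f'(y) dy + ∫_x^∞ ( f(y−x) − f(y+x) ) / y dy, where the first integral converges absolutely (the logarithmic singularity at y = x is integrable since f' is continuous) and the second integral converges as an improper integral at infinity. -/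
open Set MeasureTheory Filter Topology

/-- The truncated singular integral, folded onto the half-line by `y = x ∓ t`. -/
theorem setIntegral_annulus_div_sub {f : ℝ → ℝ} (hf : Continuous f) (x : ℝ) {ε R : ℝ}
    (hε : 0 < ε) (hεR : ε < R) :
    ∫ y in {y : ℝ | ε < |x - y| ∧ |x - y| < R}, f y / (x - y)
      = ∫ t in ε..R, (f (x - t) - f (x + t)) / t := by
  have hset : {y : ℝ | ε < |x - y| ∧ |x - y| < R}
      = Ioo (x - R) (x - ε) ∪ Ioo (x + ε) (x + R) := by
    ext y
    simp only [mem_ofPred_eq, mem_union, mem_Ioo]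
    constructor
    · rintro ⟨h, h'⟩
      rw [abs_lt] at h'
      rcases lt_abs.1 h with h | h
      · exact Or.inl ⟨by linarith, by linarith⟩
      · exact Or.inr ⟨by linarith, by linarith⟩
    · rintro (⟨h, h'⟩ | ⟨h, h'⟩)
      · rw [abs_of_pos (by linarith)]
        exact ⟨by linarith, by linarith⟩
      · rw [abs_of_neg (by linarith)]
        exact ⟨by linarith, by linarith⟩
  have hdisj : Disjoint (Ioo (x - R) (x - ε)) (Ioo (x + ε) (x + R)) := by
    rw [Set.disjoint_left]
    rintro y ⟨_, h⟩ ⟨h', _⟩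
    linarith
  have hleft : IntegrableOn (fun y => f y / (x - y)) (Ioo (x - R) (x - ε)) := by
    refine (ContinuousOn.integrableOn_Icc ?_).mono_set Ioo_subset_Icc_self
    exact hf.continuousOn.div (by fun_prop) fun y hy => (by linarith [hy.2] : 0 < x - y).ne'
  have hright : IntegrableOn (fun y => f y / (x - y)) (Ioo (x + ε) (x + R)) := by
    refine (ContinuousOn.integrableOn_Icc ?_).mono_set Ioo_subset_Icc_self
    exact hf.continuousOn.div (by fun_prop) fun y hy => (by linarith [hy.1] : x - y < 0).ne
  have hpos : ∀ t ∈ uIcc ε R, t ≠ 0 := fun t ht => by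
    rw [uIcc_of_le hεR.le] at ht
    exact (hε.trans_le ht.1).ne'
  have hsub : IntervalIntegrable (fun t => f (x - t) / t) volume ε R :=
    ContinuousOn.intervalIntegrable (ContinuousOn.div (by fun_prop) continuousOn_id hpos)
  have hadd : IntervalIntegrable (fun t => f (x + t) / t) volume ε R :=
    ContinuousOn.intervalIntegrable (ContinuousOn.div (by fun_prop) continuousOn_id hpos)
  rw [hset, setIntegral_union hdisj measurableSet_Ioo hleft hright,
    ← integral_Ioc_eq_integral_Ioo, ← integral_Ioc_eq_integral_Ioo,
    ← intervalIntegral.integral_of_le (by linarith), ← intervalIntegral.integral_of_le (by linarith),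
    ← intervalIntegral.integral_comp_sub_left (fun y => f y / (x - y)) x,
    ← intervalIntegral.integral_comp_add_left (fun y => f y / (x - y)) x]
  simp only [sub_sub_cancel, sub_add_cancel_left, div_neg, intervalIntegral.integral_neg, sub_div]
  rw [intervalIntegral.integral_sub hsub hadd, sub_eq_add_neg]

/-- Integration by parts of the folded singular integral against the primitive `log (t / x)`. -/
theorem integral_sub_div_eq_integral_log_mul_deriv {f : ℝ → ℝ} (hf : ContDiff ℝ 1 f) {x ε : ℝ}
    (hε : 0 < ε) (hεx : ε ≤ x) :
    ∫ t in ε..x, (f (x - t) - f (x + t)) / t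
      = (∫ t in ε..x, Real.log (t / x) * (deriv f (x - t) + deriv f (x + t)))
        - (f (x - ε) - f (x + ε)) * Real.log (ε / x) := by
  have hx : 0 < x := hε.trans_le hεx
  have hd : ∀ y, HasDerivAt f (deriv f y) y := fun y =>
    (hf.differentiable one_ne_zero y).hasDerivAt
  have hc : Continuous (deriv f) := hf.continuous_deriv le_rfl
  have hpos : ∀ t ∈ uIcc ε x, t ≠ 0 := fun t ht => by
    rw [uIcc_of_le hεx] at ht
    exact (hε.trans_le ht.1).ne'
  have hu : ∀ t ∈ uIcc ε x, HasDerivAt (fun t => f (x - t) - f (x + t))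
      (-deriv f (x - t) - deriv f (x + t)) t := fun t _ =>
    ((hd (x - t)).comp_const_sub x t).sub ((hd (x + t)).comp_const_add x t)
  have hv : ∀ t ∈ uIcc ε x, HasDerivAt (fun t => Real.log (t / x)) t⁻¹ t := fun t ht => by
    have h := ((hasDerivAt_id t).div_const x).log (div_ne_zero (hpos t ht) hx.ne')
    rwa [div_div_div_cancel_right₀ hx.ne', one_div] at h
  have h := intervalIntegral.integral_mul_deriv_eq_deriv_mul hu hv
    (Continuous.intervalIntegrable (by fun_prop) _ _)
    (ContinuousOn.intervalIntegrable (continuousOn_id.inv₀ hpos))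
  simp only [← div_eq_mul_inv] at h
  have hneg : ∫ t in ε..x, (-deriv f (x - t) - deriv f (x + t)) * Real.log (t / x)
      = -∫ t in ε..x, Real.log (t / x) * (deriv f (x - t) + deriv f (x + t)) := by
    rw [← intervalIntegral.integral_neg]
    refine intervalIntegral.integral_congr fun t _ => ?_
    ring
  rw [h, hneg, div_self hx.ne', Real.log_one]
  ring

theorem intervalIntegrable_log_div_mul {g : ℝ → ℝ} (hg : Continuous g) {x : ℝ} (hx : x ≠ 0)
    (a b : ℝ) : IntervalIntegrable (fun t => Real.log (t / x) * g t) volume a b := by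
  refine IntervalIntegrable.mul_continuousOn ?_ hg.continuousOn
  have h : IntervalIntegrable Real.log volume (a / x) (b / x) :=
    intervalIntegral.intervalIntegrable_log'
  simpa [div_eq_mul_inv, hx] using h.comp_mul_right (c := x⁻¹)

/-- The logarithmic integral over `(0, 2x)`, folded about the singularity `x`. -/
theorem integral_log_abs_mul_eq_integral_log_mul {g : ℝ → ℝ} (hg : Continuous g) {x : ℝ}
    (hx : 0 < x) :
    ∫ y in Ioo 0 (2 * x), Real.log |(y - x) / x| * g y
      = ∫ t in (0 : ℝ)..x, Real.log (t / x) * (g (x - t) + g (x + t)) := by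
  have hint : ∀ a b, IntervalIntegrable (fun t => Real.log (t / x) * g (x + t)) volume a b :=
    intervalIntegrable_log_div_mul (by fun_prop) hx.ne'
  have hint' : IntervalIntegrable (fun t => Real.log (t / x) * g (x - t)) volume 0 x :=
    intervalIntegrable_log_div_mul (by fun_prop) hx.ne' 0 x
  have hshift := intervalIntegral.integral_comp_add_left
    (fun y => Real.log ((y - x) / x) * g y) x (a := -x) (b := x)
  have hneg := intervalIntegral.integral_comp_neg
    (fun t => Real.log (t / x) * g (x + t)) (a := 0) (b := x)
  simp only [add_sub_cancel_left, add_neg_cancel, ← two_mul] at hshift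
  simp only [neg_div, Real.log_neg_eq_log, neg_zero, ← sub_eq_add_neg] at hneg
  simp only [Real.log_abs, mul_add]
  rw [← integral_Ioc_eq_integral_Ioo, ← intervalIntegral.integral_of_le (by linarith), ← hshift,
    ← intervalIntegral.integral_add_adjacent_intervals (hint (-x) 0) (hint 0 x), ← hneg,
    intervalIntegral.integral_add hint' (hint 0 x)]

theorem tendsto_sub_mul_log_div_zero {f : ℝ → ℝ} {x : ℝ} (hf : DifferentiableAt ℝ f x)
    (hx : 0 < x) :
    Tendsto (fun ε => (f (x - ε) - f (x + ε)) * Real.log (ε / x)) (𝓝[>] 0) (𝓝 0) := by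
  have hO : (fun ε => f (x - ε) - f (x + ε)) =O[𝓝[>] 0] fun ε : ℝ => ε := by
    have h : DifferentiableAt ℝ (fun ε => f (x - ε) - f (x + ε)) 0 :=
      (DifferentiableAt.comp (0 : ℝ) (by simpa using hf) (by fun_prop)).sub
        (DifferentiableAt.comp (0 : ℝ) (by simpa using hf) (by fun_prop))
    simpa using h.isBigO_sub.mono nhdsWithin_le_nhds
  have hlog : Tendsto (fun ε : ℝ => ε * Real.log (ε / x)) (𝓝[>] 0) (𝓝 0) := by
    have h : Continuous fun ε : ℝ => x * (ε / x * Real.log (ε / x)) :=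
      continuous_const.mul (Real.continuous_mul_log.comp (continuous_id.div_const x))
    refine ((h.tendsto' 0 0 (by simp)).mono_left nhdsWithin_le_nhds).congr fun ε => ?_
    field_simp
  exact (hO.mul (Asymptotics.isBigO_refl (fun ε => Real.log (ε / x)) _)).trans_tendsto hlog

/-- The folded singular integral over `(0, x)` converges to the logarithmic integral. -/
theorem tendsto_integral_sub_div {f : ℝ → ℝ} (hf : ContDiff ℝ 1 f) {x : ℝ} (hx : 0 < x) :
    Tendsto (fun ε => ∫ t in ε..x, (f (x - t) - f (x + t)) / t) (𝓝[>] 0)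
      (𝓝 (∫ y in Ioo 0 (2 * x), Real.log |(y - x) / x| * deriv f y)) := by
  have hc : Continuous (deriv f) := hf.continuous_deriv le_rfl
  have hint := intervalIntegrable_log_div_mul
    (g := fun t => deriv f (x - t) + deriv f (x + t)) (by fun_prop) hx.ne'
  rw [integral_log_abs_mul_eq_integral_log_mul hc hx]
  have hprim : Tendsto
      (fun ε => ∫ t in ε..x, Real.log (t / x) * (deriv f (x - t) + deriv f (x + t))) (𝓝[>] 0)
      (𝓝 (∫ t in (0 : ℝ)..x, Real.log (t / x) * (deriv f (x - t) + deriv f (x + t)))) := by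
    simp only [intervalIntegral.integral_symm x]
    exact ((intervalIntegral.continuous_primitive hint x).neg.tendsto 0).mono_left
      nhdsWithin_le_nhds
  have h := hprim.sub (tendsto_sub_mul_log_div_zero (hf.differentiable one_ne_zero x) hx)
  rw [sub_zero] at h
  refine h.congr' ?_
  filter_upwards [Ioc_mem_nhdsGT hx] with ε hε
  exact (integral_sub_div_eq_integral_log_mul_deriv hf hε.1 hε.2).symm

/-- **Representation formula for the Hilbert transform of an even function (Lemma htest).**
If `f` is `C¹`, even and bounded, and at a point `x > 0` its Hilbert transform exists
(with `π·Hf(x) = v`), the first integral below converges absolutely and the second converges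
as an improper integral at infinity (with value `I₂`), then
`π·Hf(x) = ∫_0^{2x} log|(y−x)/x| f'(y) dy + ∫_x^∞ (f(y−x) − f(y+x))/y dy`. -/
theorem hilbert_even_representation (f : ℝ → ℝ) (hf : ContDiff ℝ 1 f)
    (heven : ∀ x, f (-x) = f x) (M : ℝ) (hM : ∀ x, |f x| ≤ M)
    (x : ℝ) (hx : 0 < x) (v : ℝ) (hH : HilbertPVAt f x v)
    (h1 : IntegrableOn (fun y => Real.log |(y - x) / x| * deriv f y) (Ioo 0 (2*x)))
    (I₂ : ℝ)
    (h2 : Tendsto (fun R => ∫ y in Ioc x R, (f (y - x) - f (y + x)) / y) atTop (nhds I₂)) :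
    v = (∫ y in Ioo 0 (2*x), Real.log |(y - x) / x| * deriv f y) + I₂ := by
  obtain ⟨g, hg, hgv⟩ := hH
  refine tendsto_nhds_unique hgv ((h2.const_add _).congr' ?_)
  filter_upwards [eventually_gt_atTop x] with R hR
  refine tendsto_nhds_unique ?_ (hg R (hx.trans hR))
  refine ((tendsto_integral_sub_div hf hx).add_const _).congr' ?_
  filter_upwards [Ioo_mem_nhdsGT hx] with ε hε
  have hint : ∀ a b, 0 < a → a ≤ b →
      IntervalIntegrable (fun t => (f (x - t) - f (x + t)) / t) volume a b := fun a b ha hab =>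
    have hfc := hf.continuous
    ContinuousOn.intervalIntegrable (ContinuousOn.div (by fun_prop) continuousOn_id fun t ht => by
      rw [uIcc_of_le hab] at ht
      exact (ha.trans_le ht.1).ne')
  rw [setIntegral_annulus_div_sub hf.continuous x hε.1 (hε.2.trans hR),
    ← intervalIntegral.integral_add_adjacent_intervals (hint ε x hε.1 hε.2.le) (hint x R hx hR.le),
    ← intervalIntegral.integral_of_le hR.le]
  congr 1
  refine intervalIntegral.integral_congr fun t _ => ?_
  simp only [← heven (t - x), neg_sub, add_comm t x]
end

section
/- Upper bound for the Hilbert transform of a monotone even function (Corollary htcor): Let f : ℝ → ℝ be C¹, even, bounded, with f(0) = 0 and f'(x) ≥ 0 for x > 0, and let Hf(x) = (1/π) lim_{R→∞} lim_{ε→0+} ∫_{ε<|x−y|<R} f(y)/(x−y) dy be its Hilbert transform. Then for every q with 1 < q < 2 and every x > 0: π · Hf(x) ≤ log(q − 1) · ( f(qx) − f(q^{-1}x) ). (Note log(q−1) < 0 and f(qx) − f(q^{-1}x) ≥ 0, so in particular Hf(x) ≤ 0.) -/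
open Set MeasureTheory Filter Topology

/-- An even `C¹` function with nonnegative derivative on `(0,∞)` is monotone in `|y|`. -/
lemma le_of_abs_le_abs_of_even {f : ℝ → ℝ} (hf : ContDiff ℝ 1 f)
    (heven : ∀ x, f (-x) = f x) (hmono : ∀ x > (0:ℝ), 0 ≤ deriv f x) {a b : ℝ}
    (hab : |a| ≤ |b|) : f a ≤ f b := by
  have hmon : MonotoneOn f (Ici 0) := by
    refine monotoneOn_of_deriv_nonneg (convex_Ici 0) hf.continuous.continuousOn
      (hf.differentiable one_ne_zero).differentiableOn fun y hy => hmono y ?_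
    simpa using hy
  have habs : ∀ y, f |y| = f y := fun y => by
    rcases abs_choice y with h | h <;> simp [h, heven]
  rw [← habs a, ← habs b]
  exact hmon (abs_nonneg a) (abs_nonneg b) hab

/-- The truncated principal value integral, written as an integral of symmetric differences. -/
lemma setIntegral_truncated_div_sub_eq {f : ℝ → ℝ} (hf : Continuous f) (x : ℝ) {ε R : ℝ}
    (hε : 0 < ε) (hεR : ε ≤ R) :
    ∫ y in {y : ℝ | ε < |x - y| ∧ |x - y| < R}, f y / (x - y) =
      ∫ t in ε..R, (f (x - t) - f (x + t)) / t := by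
  have hset : {y : ℝ | ε < |x - y| ∧ |x - y| < R} =
      Ioo (x - R) (x - ε) ∪ Ioo (x + ε) (x + R) := by
    ext y
    simp only [mem_ofPred_eq, mem_union, mem_Ioo, lt_abs, abs_lt]
    constructor
    · rintro ⟨h | h, h1, h2⟩
      · left; constructor <;> linarith
      · right; constructor <;> linarith
    · rintro (⟨h1, h2⟩ | ⟨h1, h2⟩)
      · exact ⟨Or.inl (by linarith), by linarith, by linarith⟩
      · exact ⟨Or.inr (by linarith), by linarith, by linarith⟩
  have hdisj : Disjoint (Ioo (x - R) (x - ε)) (Ioo (x + ε) (x + R)) := by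
    rw [Set.disjoint_left]
    rintro y ⟨_, h⟩ ⟨h', _⟩
    linarith
  have hleft : IntegrableOn (fun y => f y / (x - y)) (Ioo (x - R) (x - ε)) := by
    refine (ContinuousOn.integrableOn_Icc ?_).mono_set Ioo_subset_Icc_self
    refine hf.continuousOn.div (by fun_prop) fun y hy => ?_
    have := hy.2
    linarith
  have hright : IntegrableOn (fun y => f y / (x - y)) (Ioo (x + ε) (x + R)) := by
    refine (ContinuousOn.integrableOn_Icc ?_).mono_set Ioo_subset_Icc_self
    refine hf.continuousOn.div (by fun_prop) fun y hy => ?_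
    have := hy.1
    linarith
  have hcont : ∀ g : ℝ → ℝ, Continuous g →
      IntervalIntegrable (fun t => g t / t) volume ε R := fun g hg => by
    refine ContinuousOn.intervalIntegrable ?_
    rw [uIcc_of_le hεR]
    refine hg.continuousOn.div continuousOn_id fun t ht => ?_
    exact (hε.trans_le ht.1).ne'
  rw [hset, setIntegral_union hdisj measurableSet_Ioo hleft hright,
    ← integral_Ioc_eq_integral_Ioo, ← integral_Ioc_eq_integral_Ioo,
    ← intervalIntegral.integral_of_le (by linarith),
    ← intervalIntegral.integral_of_le (by linarith),
    ← intervalIntegral.integral_comp_sub_left (fun y => f y / (x - y)) x,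
    ← intervalIntegral.integral_comp_add_left (fun y => f y / (x - y)) x]
  simp only [sub_sub_cancel, sub_add_cancel_left, div_neg, intervalIntegral.integral_neg, sub_div]
  rw [intervalIntegral.integral_sub (hcont _ (by fun_prop)) (hcont _ (by fun_prop)),
    sub_eq_add_neg]

/-- The truncated principal value integrals already satisfy the bound, once the truncation
interval contains `[(q - 1) x, x]`. -/
lemma integral_symm_diff_div_le {f : ℝ → ℝ} (hf : ContDiff ℝ 1 f)
    (heven : ∀ x, f (-x) = f x) (hmono : ∀ x > (0:ℝ), 0 ≤ deriv f x)
    {x q ε R : ℝ} (hx : 0 < x) (hq1 : 1 < q) (hq2 : q < 2)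
    (hε : 0 < ε) (hεx : ε ≤ (q - 1) * x) (hxR : x ≤ R) :
    ∫ t in ε..R, (f (x - t) - f (x + t)) / t ≤
      Real.log (q - 1) * (f (q * x) - f (q⁻¹ * x)) := by
  have hle : ∀ {a b : ℝ}, |a| ≤ |b| → f a ≤ f b := le_of_abs_le_abs_of_even hf heven hmono
  have hfc := hf.continuous
  have hax : (q - 1) * x ≤ x := by nlinarith
  have ha : 0 < (q - 1) * x := hε.trans_le hεx
  have hcont : ∀ g : ℝ → ℝ, Continuous g → ∀ {a b : ℝ}, 0 < a → a ≤ b →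
      IntervalIntegrable (fun t => g t / t) volume a b := fun g hg a b h0 hab => by
    refine ContinuousOn.intervalIntegrable ?_
    rw [uIcc_of_le hab]
    exact hg.continuousOn.div continuousOn_id fun t ht => (h0.trans_le ht.1).ne'
  have hnonpos : ∀ t, 0 < t → (f (x - t) - f (x + t)) / t ≤ 0 := fun t ht => by
    refine div_nonpos_of_nonpos_of_nonneg (sub_nonpos.2 (hle ?_)) ht.le
    rw [abs_of_pos (by linarith : 0 < x + t), abs_le]
    constructor <;> linarith
  have hD : Continuous fun t => f (x - t) - f (x + t) := by fun_prop
  have hI₁ := hcont _ hD hε hεx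
  have hI₂ := hcont _ hD ha hax
  have hI₃ := hcont _ hD hx hxR
  rw [← intervalIntegral.integral_add_adjacent_intervals (hI₁.trans hI₂) hI₃,
    ← intervalIntegral.integral_add_adjacent_intervals hI₁ hI₂]
  have hint_nonpos : ∀ {a b : ℝ}, 0 < a → a ≤ b →
      ∫ t in a..b, (f (x - t) - f (x + t)) / t ≤ 0 := fun {a b} h0 hab => by
    rw [intervalIntegral.integral_of_le hab]
    exact setIntegral_nonpos measurableSet_Ioc fun t ht => hnonpos t (h0.trans ht.1)
  have hmid : ∫ t in (q - 1) * x..x, (f (x - t) - f (x + t)) / t ≤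
      ∫ t in (q - 1) * x..x, (f (q⁻¹ * x) - f (q * x)) / t := by
    refine intervalIntegral.integral_mono_on hax hI₂ (hcont _ continuous_const ha hax)
      fun t ht => ?_
    have ht0 : 0 < t := ha.trans_le ht.1
    have hq : 2 - q ≤ q⁻¹ := by
      rw [le_inv_comm₀ (by linarith) (by linarith), ← one_div, le_div_iff₀ (by linarith)]
      nlinarith [sq_nonneg (q - 1)]
    refine div_le_div_of_nonneg_right (sub_le_sub (hle ?_) (hle ?_)) ht0.le
    · rw [abs_of_nonneg (by linarith [ht.2]), abs_of_nonneg (by positivity)]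
      nlinarith [ht.1]
    · rw [abs_of_nonneg (by positivity), abs_of_nonneg (by positivity)]
      linarith [ht.1]
  have hval : ∫ t in (q - 1) * x..x, (f (q⁻¹ * x) - f (q * x)) / t =
      Real.log (q - 1) * (f (q * x) - f (q⁻¹ * x)) := by
    simp only [div_eq_mul_inv _ (_ : ℝ)]
    rw [intervalIntegral.integral_const_mul, integral_inv_of_pos ha hx,
      div_mul_cancel_right₀ hx.ne', Real.log_inv]
    ring
  linarith [hint_nonpos hε hεx, hint_nonpos hx hxR]

/-- **Upper bound for the Hilbert transform of a monotone even function (Corollary htcor).**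
If `f` is `C¹`, even, bounded, `f(0) = 0`, nondecreasing on `(0,∞)`, and its Hilbert transform
exists at `x > 0` with `π·Hf(x) = v`, then for every `1 < q < 2`,
`π·Hf(x) ≤ log(q−1)·(f(qx) − f(x/q))`. -/
theorem hilbert_monotone_even_upper_bound (f : ℝ → ℝ) (hf : ContDiff ℝ 1 f)
    (heven : ∀ x, f (-x) = f x) (M : ℝ) (hM : ∀ x, |f x| ≤ M) (hf0 : f 0 = 0)
    (hmono : ∀ x > (0:ℝ), 0 ≤ deriv f x)
    (x : ℝ) (hx : 0 < x) (v : ℝ) (hH : HilbertPVAt f x v)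
    (q : ℝ) (hq1 : 1 < q) (hq2 : q < 2) :
    v ≤ Real.log (q - 1) * (f (q * x) - f (q⁻¹ * x)) := by
  obtain ⟨g, hg, hgv⟩ := hH
  refine le_of_tendsto hgv ?_
  filter_upwards [eventually_ge_atTop x] with R hR
  have ha : 0 < (q - 1) * x := mul_pos (by linarith) hx
  refine le_of_tendsto (hg R (hx.trans_le hR)) ?_
  filter_upwards [Ioc_mem_nhdsGT ha] with ε hε
  have hεR : ε ≤ R := by nlinarith [hε.2]
  rw [setIntegral_truncated_div_sub_eq hf.continuous x hε.1 hεR]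
  exact integral_symm_diff_div_le hf heven hmono hx hq1 hq2 hε.1 hε.2 hR
end
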